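/- Let C be a nonempty closed convex subset of a real Hilbert space H, T a metrically nonspreading mapping of C into itself (with the metric induced by the norm) whose fixed point set is nonempty, {α_n} a sequence in (0,1] with inf_n α_n(1 − α_n) > 0, and {x_n} the sequence defined by x₁ ∈ C and x_{n+1} = (1 − α_n)·x_n + α_n·Tx_n for all n ∈ ℕ. Then {x_n} converges weakly to a fixed point of T, i.e., there exists u ∈ C with Tu = u such that ⟪x_n, y⟫ → ⟪u, y⟫ as n → ∞ for every y ∈ H. -/

import Mathlib

open Filter
open scoped RealInnerProductSpace

/-!
Along a Mann sequence the squared distance to each fixed point decreases, by at least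
`αₙ(1 − αₙ)‖Txₙ − xₙ‖²`; hence it converges and `‖Txₙ − xₙ‖ → 0`. Both the demiclosedness of `T`
and the uniqueness of the weak cluster point come from Opial's identity: if `xᵢ ⇀ u`, then
`‖xᵢ − v‖² − ‖xᵢ − u‖² → ‖u − v‖²` for every `v`. For `v = Tu` the nonspreading inequality makes
the left side asymptotically nonpositive, so `Tu = u`. If `u` and `v` are two cluster points, both
fixed by `T`, then the left side converges along the whole sequence, and exchanging `u` and `v`
shows that its limit is both `‖u − v‖²` and `−‖u − v‖²`.
-/

open AffineMap Function Metric Set Topology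

/-- A self-mapping `T` with `2 d(Tx, Ty)² ≤ d(Tx, y)² + d(Ty, x)²`: the class of mappings
whose Mann iteration is studied. -/
def MetricallyNonspreading {X : Type*} [Dist X] (T : X → X) : Prop :=
  ∀ x y, 2 * dist (T x) (T y) ^ 2 ≤ dist (T x) y ^ 2 + dist (T y) x ^ 2

section WeakTopology

variable {ι H : Type*} [NormedAddCommGroup H] [InnerProductSpace ℝ H]
  {l : Filter ι} {x : ι → H} {u : H}

theorem tendsto_inner_of_tendsto_toWeakSpace
    (h : Tendsto (fun i ↦ toWeakSpace ℝ H (x i)) l (𝓝 (toWeakSpace ℝ H u))) (y : H) :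
    Tendsto (fun i ↦ ⟪x i, y⟫) l (𝓝 ⟪u, y⟫) := by
  simp only [real_inner_comm y]
  exact ((WeakBilin.eval_continuous (topDualPairing ℝ H).flip (innerSL ℝ y)).tendsto _).comp h

theorem tendsto_dist_sq_sub_dist_sq_of_tendsto_toWeakSpace
    (h : Tendsto (fun i ↦ toWeakSpace ℝ H (x i)) l (𝓝 (toWeakSpace ℝ H u))) (v : H) :
    Tendsto (fun i ↦ dist (x i) v ^ 2 - dist (x i) u ^ 2) l (𝓝 (dist u v ^ 2)) := by
  have hexpand (z : H) :
      dist z v ^ 2 - dist z u ^ 2 = dist u v ^ 2 + 2 * (⟪z, u - v⟫ - ⟪u, u - v⟫) := by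
    simp only [dist_eq_norm, norm_sub_sq_real, inner_sub_right, real_inner_self_eq_norm_sq]
    ring
  have hinner := (tendsto_inner_of_tendsto_toWeakSpace h (u - v)).sub_const ⟪u, u - v⟫
  simpa only [hexpand, sub_self, mul_zero, add_zero] using
    (hinner.const_mul 2).const_add (dist u v ^ 2)

theorem eq_of_mapClusterPt_toWeakSpace {v : H} {r s : ℝ}
    (hu : MapClusterPt (toWeakSpace ℝ H u) l fun i ↦ toWeakSpace ℝ H (x i))
    (hv : MapClusterPt (toWeakSpace ℝ H v) l fun i ↦ toWeakSpace ℝ H (x i))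
    (hr : Tendsto (fun i ↦ dist (x i) u) l (𝓝 r)) (hs : Tendsto (fun i ↦ dist (x i) v) l (𝓝 s)) :
    u = v := by
  obtain ⟨U, hUl, hU⟩ := mapClusterPt_iff_ultrafilter.mp hu
  obtain ⟨V, hVl, hV⟩ := mapClusterPt_iff_ultrafilter.mp hv
  have huv : dist u v ^ 2 = s ^ 2 - r ^ 2 :=
    tendsto_nhds_unique (tendsto_dist_sq_sub_dist_sq_of_tendsto_toWeakSpace hU v)
      (((hs.pow 2).sub (hr.pow 2)).mono_left hUl)
  have hvu : dist v u ^ 2 = r ^ 2 - s ^ 2 :=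
    tendsto_nhds_unique (tendsto_dist_sq_sub_dist_sq_of_tendsto_toWeakSpace hV u)
      (((hr.pow 2).sub (hs.pow 2)).mono_left hVl)
  rw [dist_comm] at hvu
  exact dist_eq_zero.mp (sq_eq_zero_iff.mp (by linarith))

end WeakTopology

theorem isClosed_toWeakSpace_image (𝕜 : Type*) {E : Type*} [RCLike 𝕜] [AddCommGroup E] [Module 𝕜 E]
    [Module ℝ E] [IsScalarTower ℝ 𝕜 E] [TopologicalSpace E] [IsTopologicalAddGroup E]
    [ContinuousSMul 𝕜 E] [LocallyConvexSpace ℝ E] {C : Set E} (hC : IsClosed C)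
    (hconv : Convex ℝ C) : IsClosed (toWeakSpace 𝕜 E '' C) := by
  rw [← hC.closure_eq, hconv.toWeakSpace_closure 𝕜]
  exact isClosed_closure

section WeakCompactness

theorem isCompact_toWeakSpace_image_closedBall (𝕜 : Type*) {H : Type*} [RCLike 𝕜]
    [NormedAddCommGroup H] [InnerProductSpace 𝕜 H] [CompleteSpace H] (a : H) (r : ℝ) :
    IsCompact (toWeakSpace 𝕜 H '' closedBall a r) := by
  let e := InnerProductSpace.toDual 𝕜 H
  let riesz (φ : WeakDual 𝕜 H) : WeakSpace 𝕜 H := toWeakSpace 𝕜 H (e.symm φ.toStrongDual)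
  have hriesz : Continuous riesz := by
    refine WeakBilin.continuous_of_continuous_eval _ fun f ↦ ?_
    obtain ⟨w, rfl⟩ := e.surjective f
    have heval (φ : WeakDual 𝕜 H) : (topDualPairing 𝕜 H).flip (riesz φ) (e w) = star (φ w) := by
      change inner 𝕜 w (e.symm φ.toStrongDual) = star (φ w)
      rw [← inner_conj_symm, InnerProductSpace.toDual_symm_apply]
      rfl
    simp only [heval]
    exact (WeakDual.eval_continuous w).star
  have hball : riesz '' (WeakDual.toStrongDual ⁻¹' closedBall (e a) r) =
      toWeakSpace 𝕜 H '' closedBall a r := by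
    rw [← image_image (fun ψ ↦ toWeakSpace 𝕜 H (e.symm ψ)) WeakDual.toStrongDual,
      image_preimage_eq _ WeakDual.toStrongDual.surjective, ← image_image (toWeakSpace 𝕜 H) e.symm,
      e.symm.image_closedBall, e.symm_apply_apply]
  exact hball ▸ (WeakDual.isCompact_closedBall (e a) r).image hriesz

variable {ι H : Type*} [NormedAddCommGroup H] [InnerProductSpace ℝ H] [CompleteSpace H]
  {l : Filter ι} {x : ι → H}

theorem exists_tendsto_toWeakSpace_of_tendsto_dist [l.NeBot] {F : Set H} (hF : F.Nonempty)
    (hdist : ∀ p ∈ F, ∃ r, Tendsto (fun i ↦ dist (x i) p) l (𝓝 r))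
    (hcluster : ∀ v, MapClusterPt (toWeakSpace ℝ H v) l (fun i ↦ toWeakSpace ℝ H (x i)) → v ∈ F) :
    ∃ u ∈ F, Tendsto (fun i ↦ toWeakSpace ℝ H (x i)) l (𝓝 (toWeakSpace ℝ H u)) := by
  obtain ⟨p, hp⟩ := hF
  obtain ⟨r, hr⟩ := hdist p hp
  have hball : ∀ᶠ i in l, toWeakSpace ℝ H (x i) ∈ toWeakSpace ℝ H '' closedBall p (r + 1) :=
    (hr.eventually_le_const (lt_add_one r)).mono fun i hi ↦ mem_image_of_mem _ hi
  have hcompact := isCompact_toWeakSpace_image_closedBall ℝ p (r + 1)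
  obtain ⟨_, ⟨u, -, rfl⟩, hu⟩ := hcompact.exists_mapClusterPt (tendsto_principal.mpr hball)
  refine ⟨u, hcluster u hu, hcompact.tendsto_nhds_of_unique_mapClusterPt hball ?_⟩
  rintro _ ⟨v, -, rfl⟩ hv
  obtain ⟨s, hs⟩ := hdist v (hcluster v hv)
  obtain ⟨t, ht⟩ := hdist u (hcluster u hu)
  rw [eq_of_mapClusterPt_toWeakSpace hv hu hs ht]

end WeakCompactness

theorem tendsto_dist_sq_sub_dist_sq_of_tendsto_dist {ι X : Type*} [PseudoMetricSpace X]
    {l : Filter ι} {x y : ι → X} {p : X} (hbdd : l.IsBoundedUnder (· ≤ ·) fun i ↦ dist (x i) p)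
    (hxy : Tendsto (fun i ↦ dist (y i) (x i)) l (𝓝 0)) (q : X) :
    Tendsto (fun i ↦ dist (y i) q ^ 2 - dist (x i) q ^ 2) l (𝓝 0) := by
  obtain ⟨M, hM⟩ := hbdd.eventually_le
  have hbound : Tendsto (fun i ↦ dist (y i) (x i) * (dist (y i) (x i) + 2 * (M + dist p q)))
      l (𝓝 0) := by
    simpa only [zero_mul] using hxy.mul (hxy.add_const (2 * (M + dist p q)))
  refine squeeze_zero_norm' (hM.mono fun i hi ↦ ?_) hbound
  have hdiff : |dist (y i) q - dist (x i) q| ≤ dist (y i) (x i) := abs_dist_sub_le _ _ _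
  have hsum : dist (y i) q + dist (x i) q ≤ dist (y i) (x i) + 2 * (M + dist p q) := by
    linarith [dist_triangle (y i) (x i) q, dist_triangle (x i) p q]
  calc ‖dist (y i) q ^ 2 - dist (x i) q ^ 2‖
      = |dist (y i) q - dist (x i) q| * (dist (y i) q + dist (x i) q) := by
        rw [Real.norm_eq_abs, sq_sub_sq, abs_mul, mul_comm,
          abs_of_nonneg (add_nonneg dist_nonneg dist_nonneg)]
    _ ≤ dist (y i) (x i) * (dist (y i) (x i) + 2 * (M + dist p q)) := by gcongr

namespace MetricallyNonspreading

theorem dist_apply_le {X : Type*} [PseudoMetricSpace X] {T : X → X}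
    (hT : MetricallyNonspreading T) {p : X} (hp : IsFixedPt T p) (x : X) :
    dist (T x) p ≤ dist x p := by
  have h := hT x p
  rw [hp, dist_comm p x] at h
  exact (sq_le_sq₀ dist_nonneg dist_nonneg).mp (by linarith)

theorem isFixedPt_of_tendsto_toWeakSpace {ι H : Type*} [NormedAddCommGroup H]
    [InnerProductSpace ℝ H] {l : Filter ι} [l.NeBot] {C : Set H} {T : C → C}
    (hT : MetricallyNonspreading T) {x : ι → C} {p u : C}
    (hbdd : l.IsBoundedUnder (· ≤ ·) fun i ↦ dist (x i) p)
    (hreg : Tendsto (fun i ↦ dist (T (x i)) (x i)) l (𝓝 0))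
    (hweak : Tendsto (fun i ↦ toWeakSpace ℝ H (x i)) l (𝓝 (toWeakSpace ℝ H u))) :
    IsFixedPt T u := by
  have hopial := tendsto_dist_sq_sub_dist_sq_of_tendsto_toWeakSpace hweak (T u)
  have hdiff := tendsto_dist_sq_sub_dist_sq_of_tendsto_dist hbdd hreg
  have hle : dist u (T u) ^ 2 ≤ 0 := by
    refine le_of_tendsto_of_tendsto' hopial
      (g := fun i ↦ (dist (T (x i)) u ^ 2 - dist (x i) u ^ 2) -
        2 * (dist (T (x i)) (T u) ^ 2 - dist (x i) (T u) ^ 2)) ?_ fun i ↦ ?_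
    · simpa only [mul_zero, sub_zero] using (hdiff u).sub ((hdiff (T u)).const_mul 2)
    · have h := hT (x i) u
      rw [dist_comm (T u)] at h
      simp only [← Subtype.dist_eq]
      linarith
  exact (dist_eq_zero.mp (sq_eq_zero_iff.mp (hle.antisymm (sq_nonneg _)))).symm

theorem mem_fixedPoints_of_mapClusterPt_toWeakSpace {ι H : Type*} [NormedAddCommGroup H]
    [InnerProductSpace ℝ H] {l : Filter ι} {C : Set H} (hC : IsClosed C) (hconv : Convex ℝ C)
    {T : C → C} (hT : MetricallyNonspreading T) {x : ι → C} {p : C}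
    (hbdd : l.IsBoundedUnder (· ≤ ·) fun i ↦ dist (x i) p)
    (hreg : Tendsto (fun i ↦ dist (T (x i)) (x i)) l (𝓝 0)) {u : H}
    (hu : MapClusterPt (toWeakSpace ℝ H u) l fun i ↦ toWeakSpace ℝ H (x i)) :
    u ∈ (↑) '' fixedPoints T := by
  obtain ⟨v, hvC, hvu⟩ := (isClosed_toWeakSpace_image ℝ hC hconv).mem_of_mapClusterPt hu
    (.of_forall fun i ↦ mem_image_of_mem _ (x i).2)
  obtain rfl := (toWeakSpace ℝ H).injective hvu
  obtain ⟨U, hUl, hU⟩ := mapClusterPt_iff_ultrafilter.mp hu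
  exact ⟨⟨v, hvC⟩,
    hT.isFixedPt_of_tendsto_toWeakSpace (hbdd.mono hUl) (hreg.mono_left hUl) hU, rfl⟩

end MetricallyNonspreading

section MannIteration

variable {V P : Type*} [NormedAddCommGroup V] [InnerProductSpace ℝ V] [MetricSpace P]
  [NormedAddTorsor V P]

theorem dist_lineMap_sq (a b p : P) (t : ℝ) :
    dist (lineMap a b t) p ^ 2 =
      (1 - t) * dist a p ^ 2 + t * dist b p ^ 2 - t * (1 - t) * dist b a ^ 2 := by
  have hline : lineMap a b t -ᵥ p = (a -ᵥ p) + t • (b -ᵥ a) := by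
    rw [lineMap_apply, vadd_vsub_assoc, add_comm]
  have hb : b -ᵥ p = (a -ᵥ p) + (b -ᵥ a) := by rw [add_comm, vsub_add_vsub_cancel]
  simp only [dist_eq_norm_vsub V, hline, hb, norm_add_sq_real, norm_smul, real_inner_smul_right,
    mul_pow, Real.norm_eq_abs, sq_abs]
  ring

theorem dist_lineMap_sq_le {a b p : P} {t : ℝ} (ht : 0 ≤ t) (h : dist b p ≤ dist a p) :
    dist (lineMap a b t) p ^ 2 ≤ dist a p ^ 2 - t * (1 - t) * dist b a ^ 2 := by
  have hsq : t * dist b p ^ 2 ≤ t * dist a p ^ 2 := by gcongr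
  linarith [dist_lineMap_sq a b p t]

variable {x y : ℕ → P} {α : ℕ → ℝ} {p : P}

theorem antitone_dist_of_succ_eq_lineMap (hx : ∀ n, x (n + 1) = lineMap (x n) (y n) (α n))
    (hα : ∀ n, α n ∈ Icc (0 : ℝ) 1) (hy : ∀ n, dist (y n) p ≤ dist (x n) p) :
    Antitone fun n ↦ dist (x n) p := by
  refine antitone_nat_of_succ_le fun n ↦
    (sq_le_sq₀ dist_nonneg dist_nonneg).mp ?_
  have hloss : 0 ≤ α n * (1 - α n) * dist (y n) (x n) ^ 2 :=
    mul_nonneg (mul_nonneg (hα n).1 (sub_nonneg.mpr (hα n).2)) (sq_nonneg _)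
  rw [hx n]
  linarith [dist_lineMap_sq_le (hα n).1 (hy n)]

theorem exists_tendsto_dist_of_succ_eq_lineMap (hx : ∀ n, x (n + 1) = lineMap (x n) (y n) (α n))
    (hα : ∀ n, α n ∈ Icc (0 : ℝ) 1) (hy : ∀ n, dist (y n) p ≤ dist (x n) p) :
    ∃ r, Tendsto (fun n ↦ dist (x n) p) atTop (𝓝 r) :=
  ⟨_, tendsto_atTop_ciInf (antitone_dist_of_succ_eq_lineMap hx hα hy)
    ⟨0, forall_mem_range.mpr fun _ ↦ dist_nonneg⟩⟩

theorem tendsto_dist_zero_of_succ_eq_lineMap (hx : ∀ n, x (n + 1) = lineMap (x n) (y n) (α n))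
    {c : ℝ} (hc : 0 < c) (hcα : ∀ n, c ≤ α n * (1 - α n))
    (hy : ∀ n, dist (y n) p ≤ dist (x n) p) :
    Tendsto (fun n ↦ dist (y n) (x n)) atTop (𝓝 0) := by
  have hα (n : ℕ) : α n ∈ Icc (0 : ℝ) 1 :=
    ⟨by nlinarith [hcα n, sq_nonneg (α n)], by nlinarith [hcα n, sq_nonneg (1 - α n)]⟩
  obtain ⟨r, hr⟩ := exists_tendsto_dist_of_succ_eq_lineMap hx hα hy
  have hdecrease :
      Tendsto (fun n ↦ c⁻¹ * (dist (x n) p ^ 2 - dist (x (n + 1)) p ^ 2)) atTop (𝓝 0) := by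
    simpa using ((hr.pow 2).sub ((hr.comp (tendsto_add_atTop_nat 1)).pow 2)).const_mul c⁻¹
  have hsq : Tendsto (fun n ↦ dist (y n) (x n) ^ 2) atTop (𝓝 0) := by
    refine squeeze_zero (fun n ↦ sq_nonneg _) (fun n ↦ ?_) hdecrease
    have hloss : c * dist (y n) (x n) ^ 2 ≤ α n * (1 - α n) * dist (y n) (x n) ^ 2 := by
      gcongr
      exact hcα n
    rw [le_inv_mul_iff₀ hc, hx n]
    linarith [dist_lineMap_sq_le (hα n).1 (hy n)]
  simpa using hsq.sqrt

end MannIteration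

/-- Mann iteration for a metrically nonspreading self-mapping `T` of a nonempty closed
convex subset of a real Hilbert space: if `T` has a fixed point, `αₙ ∈ (0,1]` and
`infₙ αₙ(1 − αₙ) > 0`, then the Mann sequence `{xₙ}` converges weakly to a fixed point
of `T`. -/
theorem stmt_16 {H : Type*} [NormedAddCommGroup H] [InnerProductSpace ℝ H]
    [CompleteSpace H] (C : Set H) (hC : C.Nonempty) (hCc : IsClosed C) (hCv : Convex ℝ C)
    (T : C → C)
    (hT : ∀ x y : C, 2 * dist (T x) (T y) ^ 2 ≤ dist (T x) y ^ 2 + dist (T y) x ^ 2)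
    (hfix : ∃ u : C, T u = u)
    (α : ℕ → ℝ) (hα : ∀ n, α n ∈ Set.Ioc (0 : ℝ) 1)
    (hinf : 0 < ⨅ n : ℕ, α n * (1 - α n))
    (x : ℕ → C)
    (hx : ∀ n : ℕ, (x (n + 1) : H) = (1 - α n) • (x n : H) + α n • (T (x n) : H)) :
    ∃ u : C, T u = u ∧
      ∀ y : H, Tendsto (fun n : ℕ => ⟪(x n : H), y⟫) atTop (nhds ⟪(u : H), y⟫) := by
  have hT' : MetricallyNonspreading T := hT
  have hα' (n : ℕ) : α n ∈ Icc (0 : ℝ) 1 := Ioc_subset_Icc_self (hα n)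
  have hbelow : BddBelow (range fun n ↦ α n * (1 - α n)) :=
    ⟨0, forall_mem_range.mpr fun n ↦ mul_nonneg (hα' n).1 (sub_nonneg.mpr (hα' n).2)⟩
  have hmann (n : ℕ) : (x (n + 1) : H) = lineMap (x n : H) (T (x n) : H) (α n) := by
    rw [hx n, lineMap_apply_module]
  have hdist (q : C) (hq : q ∈ fixedPoints T) : ∃ r, Tendsto (fun n ↦ dist (x n) q) atTop (𝓝 r) :=
    exists_tendsto_dist_of_succ_eq_lineMap (x := fun n ↦ (x n : H)) hmann hα' fun n ↦
      hT'.dist_apply_le hq (x n)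
  obtain ⟨p, hp⟩ := hfix
  obtain ⟨r, hr⟩ := hdist p hp
  have hreg : Tendsto (fun n ↦ dist (T (x n)) (x n)) atTop (𝓝 0) :=
    tendsto_dist_zero_of_succ_eq_lineMap (x := fun n ↦ (x n : H)) hmann hinf (ciInf_le hbelow)
      fun n ↦ hT'.dist_apply_le hp (x n)
  obtain ⟨_, ⟨u, hu, rfl⟩, hweak⟩ := exists_tendsto_toWeakSpace_of_tendsto_dist
    (F := Subtype.val '' fixedPoints T) ⟨p, p, hp, rfl⟩ (forall_mem_image.mpr hdist) fun _ ↦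
      hT'.mem_fixedPoints_of_mapClusterPt_toWeakSpace hCc hCv hr.isBoundedUnder_le hreg
  exact ⟨u, hu, tendsto_inner_of_tendsto_toWeakSpace hweak⟩
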